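/- arXiv:2110.10146 — 3 statements merged into one kernel-verified Lean document; each statement's English description precedes it below -/
import Mathlib

section
/- For every integer k ≥ 2 and every real s > 1 such that P_{k−1}(s) > 1, one has P_k′(s) < P′(s) < 0, where P′ and P_k′ denote the derivatives of the prime zeta function P and of P_k respectively. -/
open MeasureTheory Real

/-- The prime zeta function `P(s) = ∑_p p^{-s}` (sum over all primes). -/
noncomputable def primeZeta (s : ℝ) : ℝ := ∑' p : Nat.Primes, (p.1 : ℝ) ^ (-s)

/-- The set of `k`-almost primes: positive integers with exactly `k` prime
factors counted with multiplicity. -/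
def almostPrimes (k : ℕ) : Set ℕ := {n | 0 < n ∧ n.primeFactorsList.length = k}

/-- `P_k(s) = ∑_{n ∈ N_k} n^{-s}`; note `P_0(s) = 1` since `N_0 = {1}`. -/
noncomputable def Pk (k : ℕ) (s : ℝ) : ℝ := ∑' n : almostPrimes k, (n.1 : ℝ) ^ (-s)

/-- Translated sum `f(A, h) = ∑_{a ∈ A} 1/(a (log a + h))`. -/
noncomputable def transSum (A : Set ℕ) (h : ℝ) : ℝ :=
  ∑' a : A, 1 / ((a.1 : ℝ) * (Real.log a.1 + h))

/-!
Differentiating termwise, `-P_k′(s) = ∑_{n ∈ N_k} n^{-s} log n`. A pair `(p, m)` of a prime and an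
element of `N_k` is determined by `n = p m ∈ N_{k+1}` and the prime divisor `p` of `n`, and
`∑_{p ∣ n} log p ≤ log n`. Expanding the product of the two series therefore gives

`-P′(s) P_k(s) = ∑_{(p, m)} (p m)^{-s} log p`
`             ≤ ∑_{n ∈ N_{k+1}} n^{-s} ∑_{p ∣ n} log p ≤ -P_{k+1}′(s)`.

If `P_k(s) > 1`, then `P_{k+1}′(s) ≤ P_k(s) P′(s) < P′(s)` because `P′(s)` is negative.
-/

open Filter Asymptotics
open scoped ArithmeticFunction.vonMangoldt

section DirichletSeries

variable {A B : Set ℕ} {s : ℝ}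

lemma summable_natCast_rpow_neg_subtype (A : Set ℕ) (hs : 1 < s) :
    Summable fun n : A ↦ (n : ℝ) ^ (-s) :=
  (Real.summable_nat_rpow.2 (neg_lt_neg hs)).subtype A

lemma log_mul_rpow_natCast_nonneg (n : ℕ) (s : ℝ) : 0 ≤ Real.log n * (n : ℝ) ^ s :=
  mul_nonneg (Real.log_natCast_nonneg n) (by positivity)

lemma summable_log_mul_rpow_neg (hs : 1 < s) :
    Summable fun n : ℕ ↦ Real.log n * (n : ℝ) ^ (-s) := by
  obtain ⟨t, ht, hts⟩ := exists_between hs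
  have log_isBigO : (fun x : ℝ ↦ Real.log x * x ^ (-s)) =O[atTop] fun x ↦ x ^ (-t) := by
    refine ((isLittleO_log_rpow_atTop (sub_pos.2 hts)).isBigO.mul
      (isBigO_refl (fun x : ℝ ↦ x ^ (-s)) atTop)).congr' .rfl ?_
    filter_upwards [eventually_gt_atTop 0] with x hx
    rw [← Real.rpow_add hx]
    ring_nf
  exact summable_of_isBigO_nat (Real.summable_nat_rpow.2 (neg_lt_neg ht))
    (log_isBigO.comp_tendsto tendsto_natCast_atTop_atTop)

lemma summable_log_mul_rpow_neg_subtype (A : Set ℕ) (hs : 1 < s) :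
    Summable fun n : A ↦ Real.log n * (n : ℝ) ^ (-s) :=
  (summable_log_mul_rpow_neg hs).subtype A

lemma hasDerivAt_tsum_rpow_neg (hA : 0 ∉ A) (hs : 1 < s) :
    HasDerivAt (fun t : ℝ ↦ ∑' n : A, (n : ℝ) ^ (-t))
      (-∑' n : A, Real.log n * (n : ℝ) ^ (-s)) s := by
  obtain ⟨t, ht, hts⟩ := exists_between hs
  have one_le (n : A) : (1 : ℝ) ≤ n :=
    Nat.one_le_cast.2 (Nat.one_le_iff_ne_zero.2 (ne_of_mem_of_not_mem n.2 hA))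
  rw [← tsum_neg]
  refine hasDerivAt_tsum_of_isPreconnected (t := Set.Ioi t)
    (g' := fun (n : A) y ↦ -(Real.log n * (n : ℝ) ^ (-y)))
    (summable_log_mul_rpow_neg_subtype A ht) isOpen_Ioi isPreconnected_Ioi
    (fun n y _ ↦ ?_) (fun n y hy ↦ ?_) hts (summable_natCast_rpow_neg_subtype A hs) hts
  · simpa using (hasDerivAt_id y).neg.const_rpow (zero_lt_one.trans_le (one_le n))
  · rw [norm_neg, Real.norm_of_nonneg (log_mul_rpow_natCast_nonneg n (-y))]
    have : -y ≤ -t := neg_le_neg (le_of_lt hy)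
    gcongr
    exact one_le n

lemma sum_log_primeFactors_le_log (n : ℕ) : ∑ p ∈ n.primeFactors, Real.log p ≤ Real.log n := by
  calc ∑ p ∈ n.primeFactors, Real.log p
      = ∑ p ∈ n.primeFactors, Λ p := Finset.sum_congr rfl fun p hp ↦
        (ArithmeticFunction.vonMangoldt_apply_prime (Nat.prime_of_mem_primeFactors hp)).symm
    _ ≤ ∑ d ∈ n.divisors, Λ d := Finset.sum_le_sum_of_subset_of_nonneg
        (fun _ hp ↦ Nat.mem_divisors.2
          ⟨Nat.dvd_of_mem_primeFactors hp, (Nat.mem_primeFactors.1 hp).2.2⟩)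
        fun _ _ _ ↦ ArithmeticFunction.vonMangoldt_nonneg
    _ = Real.log n := ArithmeticFunction.vonMangoldt_sum

lemma tsum_primeFactors_log_mul_rpow_le (n : ℕ) (s : ℝ) :
    ∑' p : n.primeFactors, Real.log p * (n : ℝ) ^ s ≤ Real.log n * (n : ℝ) ^ s := by
  rw [tsum_mul_right, Finset.tsum_subtype n.primeFactors fun p ↦ Real.log p]
  gcongr
  exact sum_log_primeFactors_le_log n

lemma log_mul_rpow_sigma_primeFactors_nonneg (B : Set ℕ) (s : ℝ)
    (x : Σ n : B, n.1.primeFactors) : 0 ≤ Real.log x.2 * (x.1 : ℝ) ^ s :=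
  mul_nonneg (Real.log_natCast_nonneg _) (by positivity)

lemma summable_sigma_primeFactors_log_mul_rpow_neg (B : Set ℕ) (hs : 1 < s) :
    Summable fun x : Σ n : B, n.1.primeFactors ↦ Real.log x.2 * (x.1 : ℝ) ^ (-s) :=
  (summable_sigma_of_nonneg (log_mul_rpow_sigma_primeFactors_nonneg B (-s))).2
    ⟨fun _ ↦ (hasSum_fintype _).summable,
      (summable_log_mul_rpow_neg_subtype B hs).of_nonneg_of_le
        (fun n ↦ tsum_nonneg fun p ↦ log_mul_rpow_sigma_primeFactors_nonneg B (-s) ⟨n, p⟩)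
        fun n ↦ tsum_primeFactors_log_mul_rpow_le n (-s)⟩

lemma tsum_sigma_primeFactors_log_mul_rpow_neg_le (B : Set ℕ) (hs : 1 < s) :
    ∑' x : Σ n : B, n.1.primeFactors, Real.log x.2 * (x.1 : ℝ) ^ (-s)
      ≤ ∑' n : B, Real.log n * (n : ℝ) ^ (-s) := by
  have summable_sigma := summable_sigma_primeFactors_log_mul_rpow_neg B hs
  rw [summable_sigma.tsum_sigma]
  exact summable_sigma.sigma.tsum_le_tsum
    (fun n ↦ tsum_primeFactors_log_mul_rpow_le n (-s)) (summable_log_mul_rpow_neg_subtype B hs)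

lemma tsum_primes_log_mul_rpow_mul_tsum_le (hB : 0 ∉ B)
    (hAB : ∀ p m : ℕ, p.Prime → m ∈ A → p * m ∈ B) (hs : 1 < s) :
    (∑' p : Nat.Primes, Real.log p * (p : ℝ) ^ (-s)) * ∑' m : A, (m : ℝ) ^ (-s)
      ≤ ∑' n : B, Real.log n * (n : ℝ) ^ (-s) := by
  let toSigma (x : Nat.Primes × A) : Σ n : B, n.1.primeFactors :=
    have hmem : (x.1 * x.2 : ℕ) ∈ B := hAB x.1 x.2 x.1.2 x.2.2
    ⟨⟨x.1 * x.2, hmem⟩, ⟨x.1, Nat.mem_primeFactors.2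
      ⟨x.1.2, dvd_mul_right _ _, ne_of_mem_of_not_mem hmem hB⟩⟩⟩
  have toSigma_injective : Function.Injective toSigma := by
    rintro ⟨p, m⟩ ⟨q, l⟩ h
    have hpq : p = q := Subtype.ext (congrArg (fun y ↦ (y.2 : ℕ)) h)
    subst hpq
    have hml : (p * m : ℕ) = p * l := congrArg (fun y ↦ (y.1 : ℕ)) h
    exact Prod.ext rfl (Subtype.ext (Nat.eq_of_mul_eq_mul_left p.2.pos hml))
  have summable_primes : Summable fun p : Nat.Primes ↦ Real.log p * (p : ℝ) ^ (-s) :=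
    summable_log_mul_rpow_neg_subtype {p | p.Prime} hs
  have summable_A := summable_natCast_rpow_neg_subtype A hs
  calc _ = ∑' x : Nat.Primes × A, Real.log x.1 * (x.1 : ℝ) ^ (-s) * (x.2 : ℝ) ^ (-s) :=
        summable_primes.tsum_mul_tsum summable_A <| summable_primes.mul_of_nonneg summable_A
          (fun p ↦ log_mul_rpow_natCast_nonneg p (-s)) fun m ↦ by positivity
    _ = ∑' x, Real.log (toSigma x).2 * ((toSigma x).1 : ℝ) ^ (-s) := by
        refine tsum_congr fun x ↦ ?_
        rw [mul_assoc, ← Real.mul_rpow (by positivity) (by positivity), ← Nat.cast_mul]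
    _ ≤ ∑' x : Σ n : B, n.1.primeFactors, Real.log x.2 * (x.1 : ℝ) ^ (-s) :=
        tsum_comp_le_tsum_of_inj (summable_sigma_primeFactors_log_mul_rpow_neg B hs)
          (log_mul_rpow_sigma_primeFactors_nonneg B (-s)) toSigma_injective
    _ ≤ ∑' n : B, Real.log n * (n : ℝ) ^ (-s) := tsum_sigma_primeFactors_log_mul_rpow_neg_le B hs

end DirichletSeries

section AlmostPrimes

variable {s : ℝ}

lemma mem_almostPrimes_iff {k n : ℕ} : n ∈ almostPrimes k ↔ Nat.IsAlmostPrime k n :=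
  and_congr_left' Nat.pos_iff_ne_zero

lemma zero_notMem_almostPrimes (k : ℕ) : 0 ∉ almostPrimes k := fun h ↦ lt_irrefl 0 h.1

lemma prime_mul_mem_almostPrimes_succ {k p m : ℕ} (hp : p.Prime) (hm : m ∈ almostPrimes k) :
    p * m ∈ almostPrimes (k + 1) := by
  rw [mem_almostPrimes_iff] at hm ⊢
  simpa only [add_comm 1 k] using hp.isAlmostPrime_one.mul hm

lemma deriv_primeZeta (hs : 1 < s) :
    deriv primeZeta s = -∑' p : Nat.Primes, Real.log p * (p : ℝ) ^ (-s) :=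
  (hasDerivAt_tsum_rpow_neg (A := {p | p.Prime}) Nat.not_prime_zero hs).deriv

lemma deriv_Pk (k : ℕ) (hs : 1 < s) :
    deriv (Pk k) s = -∑' n : almostPrimes k, Real.log n * (n : ℝ) ^ (-s) :=
  (hasDerivAt_tsum_rpow_neg (zero_notMem_almostPrimes k) hs).deriv

lemma deriv_primeZeta_neg (hs : 1 < s) : deriv primeZeta s < 0 := by
  rw [deriv_primeZeta hs, neg_lt_zero]
  refine (summable_log_mul_rpow_neg_subtype {p | p.Prime} hs).tsum_pos
    (fun p ↦ log_mul_rpow_natCast_nonneg p (-s)) ⟨2, Nat.prime_two⟩ ?_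
  exact mul_pos (Real.log_pos (by norm_num)) (by positivity)

lemma deriv_Pk_succ_le (k : ℕ) (hs : 1 < s) :
    deriv (Pk (k + 1)) s ≤ deriv primeZeta s * Pk k s := by
  rw [deriv_Pk (k + 1) hs, deriv_primeZeta hs, neg_mul, neg_le_neg_iff]
  exact tsum_primes_log_mul_rpow_mul_tsum_le (zero_notMem_almostPrimes (k + 1))
    (fun _ _ ↦ prime_mul_mem_almostPrimes_succ) hs

end AlmostPrimes

/-- For every `k ≥ 2` and real `s > 1` with `P_{k−1}(s) > 1`, one has
`P_k′(s) < P′(s) < 0`. -/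
theorem stmt_11 (k : ℕ) (hk : 2 ≤ k) (s : ℝ) (hs : 1 < s)
    (hP : 1 < Pk (k - 1) s) :
    deriv (Pk k) s < deriv primeZeta s ∧ deriv primeZeta s < 0 := by
  have primeZeta_neg : deriv primeZeta s < 0 := deriv_primeZeta_neg hs
  refine ⟨?_, primeZeta_neg⟩
  calc deriv (Pk k) s = deriv (Pk (k - 1 + 1)) s := by rw [Nat.sub_add_cancel (by lia)]
    _ ≤ deriv primeZeta s * Pk (k - 1) s := deriv_Pk_succ_le (k - 1) hs
    _ < deriv primeZeta s := mul_lt_of_one_lt_right primeZeta_neg hP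
end

section
/- For every integer k ≥ 2, the function s ↦ P_k(s)/(2^{−s} + 3^{−s}) is strictly decreasing on (1, ∞). -/
open MeasureTheory Real

/-!
For `x` larger than every `b` in a finite set `B`, the quotient `x ^ (-s) / ∑ b ∈ B, b ^ (-s)` is
the reciprocal of `∑ b ∈ B, (x / b) ^ s`, a sum of exponentials with bases exceeding one, and so
strictly decreases in `s`. Every `k`-almost prime is at least `2 ^ k > 3` when `k ≥ 2`, so with
`B = {2, 3}` each term of `P_k(s) / (2 ^ (-s) + 3 ^ (-s))` strictly decreases.
-/

section RpowNegQuotient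

variable {ι κ : Type*} {a : ι → ℝ} {B : Finset κ} {b : κ → ℝ} {x : ℝ} {S : Set ℝ}

lemma rpow_neg_div_sum_rpow_neg (hx : 0 ≤ x) (hb : ∀ j ∈ B, 0 ≤ b j) (s : ℝ) :
    x ^ (-s) / ∑ j ∈ B, b j ^ (-s) = (∑ j ∈ B, (x / b j) ^ s)⁻¹ := by
  have factor : ∑ j ∈ B, (x / b j) ^ s = x ^ s * ∑ j ∈ B, b j ^ (-s) := by
    rw [Finset.mul_sum]
    refine Finset.sum_congr rfl fun j hj ↦ ?_
    rw [div_rpow hx (hb j hj), rpow_neg (hb j hj), div_eq_mul_inv]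
  rw [factor, mul_inv, rpow_neg hx, div_eq_mul_inv]

lemma strictMono_sum_rpow (hB : B.Nonempty) (hb : ∀ j ∈ B, 1 < b j) :
    StrictMono fun s : ℝ ↦ ∑ j ∈ B, b j ^ s :=
  fun _ _ hst ↦ Finset.sum_lt_sum_of_nonempty hB fun j hj ↦
    rpow_lt_rpow_of_exponent_lt (hb j hj) hst

lemma strictAnti_rpow_neg_div_sum_rpow_neg (hB : B.Nonempty) (hb : ∀ j ∈ B, 0 < b j)
    (hbx : ∀ j ∈ B, b j < x) :
    StrictAnti fun s : ℝ ↦ x ^ (-s) / ∑ j ∈ B, b j ^ (-s) := by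
  have hx : 0 < x := hB.elim fun j hj ↦ (hb j hj).trans (hbx j hj)
  have one_lt_ratio : ∀ j ∈ B, 1 < x / b j := fun j hj ↦ (one_lt_div (hb j hj)).2 (hbx j hj)
  intro s t hst
  simp only [rpow_neg_div_sum_rpow_neg hx.le fun j hj ↦ (hb j hj).le]
  exact inv_strictAnti₀ (Finset.sum_pos (fun j hj ↦ rpow_pos_of_pos (div_pos hx (hb j hj)) s) hB)
    (strictMono_sum_rpow hB one_lt_ratio hst)

lemma strictAntiOn_tsum_rpow_neg_div_sum_rpow_neg [Nonempty ι] (hB : B.Nonempty)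
    (hb : ∀ j ∈ B, 0 < b j) (hba : ∀ i, ∀ j ∈ B, b j < a i)
    (ha : ∀ s ∈ S, Summable fun i ↦ a i ^ (-s)) :
    StrictAntiOn (fun s : ℝ ↦ (∑' i, a i ^ (-s)) / ∑ j ∈ B, b j ^ (-s)) S := by
  intro s hs t ht hst
  have term_lt (i : ι) := strictAnti_rpow_neg_div_sum_rpow_neg hB hb (hba i) hst
  simp only [← tsum_div_const]
  exact Summable.tsum_lt_tsum (i := Classical.arbitrary ι) (fun i ↦ (term_lt i).le)
    (term_lt _) ((ha t ht).div_const _) ((ha s hs).div_const _)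

end RpowNegQuotient

section AlmostPrimes

variable {k n : ℕ}

lemma two_pow_mem_almostPrimes (k : ℕ) : 2 ^ k ∈ almostPrimes k :=
  ⟨by positivity, by rw [Nat.prime_two.primeFactorsList_pow, List.length_replicate]⟩

lemma two_pow_le_of_mem_almostPrimes (hn : n ∈ almostPrimes k) : 2 ^ k ≤ n := by
  obtain ⟨n_pos, rfl⟩ := hn
  calc 2 ^ n.primeFactorsList.length
      ≤ n.primeFactorsList.prod :=
        List.pow_card_le_prod _ _ fun _ hp ↦ (Nat.prime_of_mem_primeFactorsList hp).two_le
    _ = n := Nat.prod_primeFactorsList n_pos.ne'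

end AlmostPrimes

lemma summable_subtype_rpow_neg (A : Set ℕ) {s : ℝ} (hs : 1 < s) :
    Summable fun n : A ↦ (n.1 : ℝ) ^ (-s) :=
  (Real.summable_nat_rpow.2 (neg_lt_neg hs)).subtype A

/-- For every `k ≥ 2`, the function `s ↦ P_k(s)/(2^{−s} + 3^{−s})` is
strictly decreasing on `(1, ∞)`. -/
theorem stmt_13 (k : ℕ) (hk : 2 ≤ k) :
    StrictAntiOn (fun s : ℝ => Pk k s / ((2 : ℝ) ^ (-s) + (3 : ℝ) ^ (-s))) (Set.Ioi 1) := by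
  have : Nonempty (almostPrimes k) := ⟨⟨2 ^ k, two_pow_mem_almostPrimes k⟩⟩
  have four_le (n : almostPrimes k) : (4 : ℝ) ≤ n.1 := by
    exact_mod_cast (Nat.pow_le_pow_right two_pos hk).trans (two_pow_le_of_mem_almostPrimes n.2)
  have denominator_lt (n : almostPrimes k) : ∀ b ∈ ({2, 3} : Finset ℝ), b < n.1 := by
    simp only [Finset.mem_insert, Finset.mem_singleton]
    rintro b (rfl | rfl) <;> linarith [four_le n]
  simpa [Pk] using strictAntiOn_tsum_rpow_neg_div_sum_rpow_neg (b := fun x : ℝ ↦ x)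
    (Finset.insert_nonempty 2 {3}) (by simp) denominator_lt
    fun s hs ↦ summable_subtype_rpow_neg (almostPrimes k) (Set.mem_Ioi.1 hs)
end

section
/- Let k ≥ 2 be an integer and let σ > 1 be a real number such that P_k(s) > P(s) for all s with 1 < s < σ and P_k(s) < P(s) for all s > σ. Then the function h ↦ e^{(σ−1)h} (f(N_k, h) − f(N₁, h)) is strictly increasing on [0, ∞). -/
open MeasureTheory Real

/-!
The integral `∫_{s > 1} a^{-s} e^{(σ-s)h} ds` equals `e^{(σ-1)h} / (a (log a + h))`, so
`e^{(σ-1)h} (f(A, h) - f(B, h))` is the integral over `s > 1` of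
`(∑_{a ∈ A} a^{-s} - ∑_{b ∈ B} b^{-s}) e^{(σ-s)h}`. When the difference of Dirichlet series has the
sign of `σ - s`, this integrand is strictly increasing in `h` for every `s ≠ σ`.

Interchanging sum and integral requires `∑_{n ∈ N_k} 1/(n log n) < ∞`. Comparing Euler products
gives `∑_n z^{Ω(n)} n^{-s} ≤ ζ(s)^z` for `0 ≤ z ≤ 1`, hence `P_k(s) ≤ 2^k ζ(s)^{1/2}`, and the
singularity `(s-1)^{-1/2}` is integrable at `s = 1`.
-/

open Filter Set
open scoped ArithmeticFunction.Omega

section Integration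

variable {α ι : Type*} [MeasurableSpace α] {μ : Measure α}

lemma integral_lt_integral_of_ae_lt [NeZero μ] {f g : α → ℝ} (hf : Integrable f μ)
    (hg : Integrable g μ) (hfg : ∀ᵐ x ∂μ, f x < g x) : ∫ x, f x ∂μ < ∫ x, g x ∂μ := by
  have hle : f ≤ᵐ[μ] g := hfg.mono fun _ => le_of_lt
  refine (integral_mono_ae hf hg hle).lt_of_ne fun heq => ?_
  obtain ⟨x, hlt, hxeq⟩ := (hfg.and ((integral_eq_iff_of_ae_le hf hg hle).1 heq)).exists
  exact hlt.ne hxeq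

lemma integrable_tsum_of_summable_integral_norm {E : Type*} [NormedAddCommGroup E]
    [CompleteSpace E] [Countable ι] {F : ι → α → E} (hF : ∀ i, Integrable (F i) μ)
    (hsum : Summable fun i => ∫ x, ‖F i x‖ ∂μ) : Integrable (fun x => ∑' i, F i x) μ := by
  have hfin : ∑' i, ‖(hF i).toL1 (F i)‖ₑ ≠ ⊤ := by
    rw [tsum_enorm_ne_top_iff_summable_norm]
    simpa only [L1.norm_of_fun_eq_integral_norm] using hsum
  refine (L1.integrable_coeFn (∑' i, (hF i).toL1 (F i))).congr ?_
  filter_upwards [Lp.coeFn_tsum hfin, ae_all_iff.2 fun i => (hF i).coeFn_toL1] with x hx hFx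
  rw [hx]
  exact tsum_congr hFx

lemma summable_integral_of_sum_le {F : ι → α → ℝ} (hF : ∀ i, Integrable (F i) μ)
    (hF0 : ∀ i, 0 ≤ᵐ[μ] F i) {g : α → ℝ} (hg : Integrable g μ)
    (hle : ∀ u : Finset ι, ∀ᵐ x ∂μ, ∑ i ∈ u, F i x ≤ g x) :
    Summable fun i => ∫ x, F i x ∂μ := by
  refine summable_of_sum_le (c := ∫ x, g x ∂μ) (fun i => integral_nonneg_of_ae (hF0 i)) fun u => ?_
  rw [← integral_finsetSum u fun i _ => hF i]
  exact integral_mono_ae (integrable_finsetSum u fun i _ => hF i) hg (hle u)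

theorem strictMonoOn_integral_mul_exp {μ : Measure ℝ} [NeZero μ] {D : ℝ → ℝ} {σ : ℝ} {S : Set ℝ}
    (hD : ∀ᵐ s ∂μ, 0 < (σ - s) * D s)
    (hint : ∀ h ∈ S, Integrable (fun s => D s * exp ((σ - s) * h)) μ) :
    StrictMonoOn (fun h => ∫ s, D s * exp ((σ - s) * h) ∂μ) S := by
  intro x hx y hy hxy
  refine integral_lt_integral_of_ae_lt (hint x hx) (hint y hy) (hD.mono fun s hs => ?_)
  rcases pos_and_pos_or_neg_and_neg_of_mul_pos hs with ⟨hσs, hDs⟩ | ⟨hσs, hDs⟩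
  · exact mul_lt_mul_of_pos_left (exp_lt_exp.2 (mul_lt_mul_of_pos_left hxy hσs)) hDs
  · exact mul_lt_mul_of_neg_left (exp_lt_exp.2 (mul_lt_mul_of_neg_left hxy hσs)) hDs

end Integration

section LaplaceRepresentation

/-- The Dirichlet series `∑_{a ∈ A} a^{-s}` of a set `A` of natural numbers, the common
generalization of `Pk k` (where `A` is `almostPrimes k`) and `primeZeta`. -/
noncomputable def setZeta (A : Set ℕ) (s : ℝ) : ℝ := ∑' a : A, (a.1 : ℝ) ^ (-s)

variable {a h : ℝ}

lemma rpow_neg_mul_exp (ha : 0 < a) (σ h s : ℝ) :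
    a ^ (-s) * exp ((σ - s) * h) = exp (σ * h) * exp (-(log a + h) * s) := by
  rw [rpow_def_of_pos ha, ← exp_add, ← exp_add]
  ring_nf

lemma integrableOn_rpow_neg_mul_exp_Ioi (ha : 0 < a) (hah : 0 < log a + h) (σ c : ℝ) :
    IntegrableOn (fun s => a ^ (-s) * exp ((σ - s) * h)) (Ioi c) := by
  simp_rw [rpow_neg_mul_exp ha]
  exact (integrableOn_exp_mul_Ioi (neg_lt_zero.2 hah) c).const_mul _

lemma integral_rpow_neg_mul_exp_Ioi_one (ha : 0 < a) (hah : 0 < log a + h) (σ : ℝ) :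
    ∫ s in Ioi (1 : ℝ), a ^ (-s) * exp ((σ - s) * h) =
      exp ((σ - 1) * h) * (1 / (a * (log a + h))) := by
  simp_rw [rpow_neg_mul_exp ha]
  rw [integral_const_mul, integral_exp_mul_Ioi (neg_lt_zero.2 hah), neg_div_neg_eq, ← mul_div_assoc,
    ← rpow_neg_mul_exp ha, rpow_neg_one]
  field_simp

lemma log_natCast_add_pos {n : ℕ} (hn : 1 < n) (hh : -log 2 < h) : 0 < log (n : ℝ) + h := by
  have hle : log 2 ≤ log (n : ℝ) := log_le_log two_pos (mod_cast hn)
  linarith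

variable {A : Set ℕ}

lemma summable_integral_rpow_neg_mul_exp (hA : ∀ a ∈ A, 0 < a)
    (hAh : ∀ a ∈ A, 0 < log (a : ℝ) + h)
    (hsum : Summable fun a : A => 1 / ((a.1 : ℝ) * (log a.1 + h))) (σ : ℝ) :
    Summable fun a : A => ∫ s in Ioi (1 : ℝ), ‖(a.1 : ℝ) ^ (-s) * exp ((σ - s) * h)‖ := by
  refine (hsum.mul_left (exp ((σ - 1) * h))).congr fun a => ?_
  rw [← integral_rpow_neg_mul_exp_Ioi_one (Nat.cast_pos.2 (hA a a.2)) (hAh a a.2)]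
  refine integral_congr_ae (.of_forall fun s => ?_)
  exact (norm_of_nonneg (by positivity)).symm

lemma integrableOn_setZeta_mul_exp (hA : ∀ a ∈ A, 0 < a) (hAh : ∀ a ∈ A, 0 < log (a : ℝ) + h)
    (hsum : Summable fun a : A => 1 / ((a.1 : ℝ) * (log a.1 + h))) (σ : ℝ) :
    IntegrableOn (fun s => setZeta A s * exp ((σ - s) * h)) (Ioi 1) := by
  simp_rw [setZeta, ← tsum_mul_right]
  exact integrable_tsum_of_summable_integral_norm
    (fun a : A => integrableOn_rpow_neg_mul_exp_Ioi (Nat.cast_pos.2 (hA a a.2)) (hAh a a.2) σ 1)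
    (summable_integral_rpow_neg_mul_exp hA hAh hsum σ)

theorem integral_setZeta_mul_exp (hA : ∀ a ∈ A, 0 < a) (hAh : ∀ a ∈ A, 0 < log (a : ℝ) + h)
    (hsum : Summable fun a : A => 1 / ((a.1 : ℝ) * (log a.1 + h))) (σ : ℝ) :
    ∫ s in Ioi 1, setZeta A s * exp ((σ - s) * h) = exp ((σ - 1) * h) * transSum A h := by
  simp_rw [setZeta, ← tsum_mul_right]
  rw [transSum, ← tsum_mul_left, ← integral_tsum_of_summable_integral_norm
    (fun a : A => integrableOn_rpow_neg_mul_exp_Ioi (Nat.cast_pos.2 (hA a a.2)) (hAh a a.2) σ 1)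
    (summable_integral_rpow_neg_mul_exp hA hAh hsum σ)]
  exact tsum_congr fun a : A =>
    integral_rpow_neg_mul_exp_Ioi_one (Nat.cast_pos.2 (hA a a.2)) (hAh a a.2) σ

lemma summable_one_div_mul_log_add_of_summable {h h' : ℝ}
    (hsum : Summable fun a : A => 1 / ((a.1 : ℝ) * (log a.1 + h))) :
    Summable fun a : A => 1 / ((a.1 : ℝ) * (log a.1 + h')) := by
  have hcast : Tendsto (fun a : A => (a.1 : ℝ)) cofinite atTop :=
    tendsto_natCast_atTop_atTop.comp
      (Nat.cofinite_eq_atTop ▸ Subtype.val_injective.tendsto_cofinite)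
  have hlog : Tendsto (fun a : A => log (a.1 : ℝ)) cofinite atTop := tendsto_log_atTop.comp hcast
  refine (hsum.mul_left 2).of_norm_bounded_eventually ?_
  filter_upwards [hcast.eventually_gt_atTop 0, hlog.eventually_gt_atTop (-h),
    hlog.eventually_gt_atTop (-h'), hlog.eventually_ge_atTop (h - 2 * h')] with a ha hpos hpos' hle
  have hah : 0 < log (a.1 : ℝ) + h := by linarith
  have hah' : 0 < log (a.1 : ℝ) + h' := by linarith
  rw [norm_of_nonneg (by positivity), mul_one_div, div_le_div_iff₀ (by positivity) (by positivity)]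
  nlinarith

end LaplaceRepresentation

theorem stmt_14_general {A B : Set ℕ} (hA : ∀ a ∈ A, 1 < a) (hB : ∀ b ∈ B, 1 < b)
    (hAsum : Summable fun a : A => 1 / ((a.1 : ℝ) * log a.1))
    (hBsum : Summable fun b : B => 1 / ((b.1 : ℝ) * log b.1)) {σ : ℝ}
    (hlt : ∀ s, 1 < s → s < σ → setZeta B s < setZeta A s)
    (hgt : ∀ s, 1 < s → σ < s → setZeta A s < setZeta B s) :
    StrictMonoOn (fun h => exp ((σ - 1) * h) * (transSum A h - transSum B h))
      (Ioi (-log 2)) := by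
  have laplace {C : Set ℕ} (hC : ∀ c ∈ C, 1 < c)
      (hCsum : Summable fun c : C => 1 / ((c.1 : ℝ) * log c.1)) {h : ℝ} (hh : -log 2 < h) :
      IntegrableOn (fun s => setZeta C s * exp ((σ - s) * h)) (Ioi 1) ∧
        ∫ s in Ioi 1, setZeta C s * exp ((σ - s) * h) = exp ((σ - 1) * h) * transSum C h := by
    have hpos : ∀ c ∈ C, 0 < c := fun c hc => zero_lt_one.trans (hC c hc)
    have hlog : ∀ c ∈ C, 0 < log (c : ℝ) + h := fun c hc => log_natCast_add_pos (hC c hc) hh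
    have hsum : Summable fun c : C => 1 / ((c.1 : ℝ) * (log c.1 + h)) :=
      summable_one_div_mul_log_add_of_summable (h := 0) (by simpa only [add_zero] using hCsum)
    exact ⟨integrableOn_setZeta_mul_exp hpos hlog hsum σ,
      integral_setZeta_mul_exp hpos hlog hsum σ⟩
  have : NeZero (volume.restrict (Ioi (1 : ℝ))) := ⟨by simp⟩
  refine (strictMonoOn_integral_mul_exp (μ := volume.restrict (Ioi 1))
    (D := fun s => setZeta A s - setZeta B s) (σ := σ) ?_ fun h hh => ?_).congr fun h hh => ?_
  · filter_upwards [ae_restrict_mem measurableSet_Ioi, ae_restrict_of_ae (Measure.ae_ne volume σ)]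
      with s hs hne
    rcases hne.lt_or_gt with hsσ | hsσ
    · exact mul_pos (sub_pos.2 hsσ) (sub_pos.2 (hlt s hs hsσ))
    · exact mul_pos_of_neg_of_neg (sub_neg.2 hsσ) (sub_neg.2 (hgt s hs hsσ))
  · simp_rw [sub_mul (setZeta A _)]
    exact (laplace hA hAsum hh).1.sub (laplace hB hBsum hh).1
  · simp_rw [sub_mul (setZeta A _)]
    rw [integral_sub (laplace hA hAsum hh).1 (laplace hB hBsum hh).1, (laplace hA hAsum hh).2,
      (laplace hB hBsum hh).2, mul_sub]

section AlmostPrimes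

/-- The completely multiplicative function `n ↦ z^{Ω(n)} n^{-s}`, whose Euler product is compared
with that of the zeta function. The condition `s ≠ 0` is needed for its value at `0` to be `0`. -/
noncomputable def omegaTwistHom (z : ℝ) {s : ℝ} (hs : s ≠ 0) : ℕ →*₀ ℝ where
  toFun n := z ^ Ω n * (n : ℝ) ^ (-s)
  map_zero' := by simp [zero_rpow (neg_ne_zero.2 hs)]
  map_one' := by simp
  map_mul' m n := by
    rcases eq_or_ne m 0 with rfl | hm
    · simp [zero_rpow (neg_ne_zero.2 hs)]
    rcases eq_or_ne n 0 with rfl | hn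
    · simp [zero_rpow (neg_ne_zero.2 hs)]
    rw [ArithmeticFunction.cardFactors_mul hm hn, pow_add, Nat.cast_mul,
      mul_rpow m.cast_nonneg n.cast_nonneg, mul_mul_mul_comm]

variable {k : ℕ} {s z : ℝ}

lemma omegaTwistHom_apply (hs : s ≠ 0) (n : ℕ) :
    omegaTwistHom z hs n = z ^ Ω n * (n : ℝ) ^ (-s) := rfl

lemma summable_pow_cardFactors_mul_rpow_neg (hs : 1 < s) (hz0 : 0 ≤ z) (hz1 : z ≤ 1) :
    Summable fun n : ℕ => z ^ Ω n * (n : ℝ) ^ (-s) :=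
  (summable_nat_rpow.2 (neg_lt_neg hs)).of_nonneg_of_le (fun n => by positivity) fun n =>
    mul_le_of_le_one_left (by positivity) (pow_le_one₀ hz0 hz1)

lemma hasProd_inv_one_sub_mul_rpow_neg (hs : 1 < s) (hz0 : 0 ≤ z) (hz1 : z ≤ 1) :
    HasProd (fun p : Nat.Primes => (1 - z * (p : ℝ) ^ (-s))⁻¹)
      (∑' n : ℕ, z ^ Ω n * (n : ℝ) ^ (-s)) := by
  have heuler := EulerProduct.eulerProduct_completely_multiplicative_hasProd
    (f := omegaTwistHom z (by linarith : s ≠ 0))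
    (summable_pow_cardFactors_mul_rpow_neg hs hz0 hz1).norm
  simpa only [omegaTwistHom_apply, pow_one,
    fun p : Nat.Primes => ArithmeticFunction.cardFactors_apply_prime p.2] using heuler

lemma inv_one_sub_mul_le_rpow {x : ℝ} (hx : x < 1) (hz0 : 0 ≤ z) (hz1 : z ≤ 1) :
    (1 - z * x)⁻¹ ≤ (1 - x)⁻¹ ^ z := by
  have hbernoulli := rpow_one_add_le_one_add_mul_self (s := -x) (by linarith) hz0 hz1
  rw [mul_neg, ← sub_eq_add_neg, ← sub_eq_add_neg] at hbernoulli
  rw [inv_rpow (sub_pos.2 hx).le]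
  exact inv_anti₀ (rpow_pos_of_pos (sub_pos.2 hx) z) hbernoulli

theorem tsum_pow_cardFactors_mul_rpow_neg_le (hs : 1 < s) (hz0 : 0 ≤ z) (hz1 : z ≤ 1) :
    ∑' n : ℕ, z ^ Ω n * (n : ℝ) ^ (-s) ≤ (∑' n : ℕ, (n : ℝ) ^ (-s)) ^ z := by
  have hzeta := hasProd_inv_one_sub_mul_rpow_neg hs zero_le_one le_rfl
  simp only [one_pow, one_mul] at hzeta
  have hlt_one (p : Nat.Primes) : (p : ℝ) ^ (-s) < 1 :=
    rpow_lt_one_of_one_lt_of_neg (mod_cast p.2.one_lt) (by linarith)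
  refine le_of_tendsto_of_tendsto' (hasProd_inv_one_sub_mul_rpow_neg hs hz0 hz1)
    (Tendsto.rpow_const hzeta (.inr hz0)) fun u => ?_
  rw [← finsetProd_rpow u _ fun p _ => inv_nonneg.2 (sub_pos.2 (hlt_one p)).le]
  refine Finset.prod_le_prod (fun p _ => inv_nonneg.2 (sub_nonneg.2 ?_)) fun p _ =>
    inv_one_sub_mul_le_rpow (hlt_one p) hz0 hz1
  exact mul_le_one₀ hz1 (by positivity) (hlt_one p).le

lemma tsum_rpow_neg_le (hs : 1 < s) : ∑' n : ℕ, (n : ℝ) ^ (-s) ≤ 1 + (s - 1)⁻¹ := by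
  have hterm : 0 ≤ s * ZetaAsymptotics.termTSum s :=
    mul_nonneg (by linarith) (tsum_nonneg fun n => ZetaAsymptotics.term_nonneg (n + 1) s)
  have hzeta := ZetaAsymptotics.zeta_limit_aux1 hs
  rw [(summable_nat_rpow.2 (neg_lt_neg hs)).tsum_eq_zero_add, Nat.cast_zero,
    zero_rpow (by linarith), zero_add]
  simp_rw [rpow_neg (Nat.cast_nonneg _), ← one_div, Nat.cast_succ]
  linarith

lemma pow_mul_sum_almostPrimes_le (hs : 1 < s) (hz0 : 0 ≤ z) (hz1 : z ≤ 1)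
    (u : Finset (almostPrimes k)) :
    z ^ k * ∑ a ∈ u, (a.1 : ℝ) ^ (-s) ≤ 1 + (s - 1) ^ (-z) := by
  have hs1 : 0 ≤ (s - 1)⁻¹ := inv_nonneg.2 (sub_pos.2 hs).le
  calc z ^ k * ∑ a ∈ u, (a.1 : ℝ) ^ (-s)
      = ∑ n ∈ u.map (.subtype _), z ^ Ω n * (n : ℝ) ^ (-s) := by
        rw [Finset.sum_map, Finset.mul_sum]
        refine Finset.sum_congr rfl fun a _ => ?_
        rw [Function.Embedding.subtype_apply, ArithmeticFunction.cardFactors_apply, a.2.2]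
    _ ≤ ∑' n : ℕ, z ^ Ω n * (n : ℝ) ^ (-s) :=
        (summable_pow_cardFactors_mul_rpow_neg hs hz0 hz1).sum_le_tsum _ fun n _ => by positivity
    _ ≤ (∑' n : ℕ, (n : ℝ) ^ (-s)) ^ z := tsum_pow_cardFactors_mul_rpow_neg_le hs hz0 hz1
    _ ≤ (1 + (s - 1)⁻¹) ^ z :=
        rpow_le_rpow (tsum_nonneg fun n => by positivity) (tsum_rpow_neg_le hs) hz0
    _ ≤ 1 ^ z + (s - 1)⁻¹ ^ z := rpow_add_le_add_rpow zero_le_one hs1 hz0 hz1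
    _ = 1 + (s - 1) ^ (-z) := by
        rw [one_rpow, inv_rpow (sub_pos.2 hs).le, rpow_neg (sub_pos.2 hs).le]

lemma integrableOn_one_add_rpow_neg_mul_exp (hz : z < 1) :
    IntegrableOn (fun s => (1 + (s - 1) ^ (-z)) * exp (1 - s)) (Ioi 1) := by
  have hexp : IntegrableOn (fun x => exp (-x)) (Ioi 0) := by
    simpa only [neg_mul, one_mul] using integrableOn_exp_mul_Ioi neg_one_lt_zero 0
  have hgamma : IntegrableOn (fun x => exp (-x) * x ^ (-z)) (Ioi 0) := by
    simpa only [sub_sub_cancel_left] using GammaIntegral_convergent (sub_pos.2 hz)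
  have hshift := ((measurePreserving_sub_right volume (1 : ℝ)).integrableOn_comp_preimage
    (measurableEmbedding_subRight 1)).2 (hexp.add hgamma)
  rw [preimage_sub_const_Ioi, zero_add] at hshift
  refine hshift.congr_fun (fun s _ => ?_) measurableSet_Ioi
  simp only [Function.comp_apply, Pi.add_apply, neg_sub]
  ring

lemma one_lt_of_mem_almostPrimes (hk : 1 ≤ k) : ∀ a ∈ almostPrimes k, 1 < a := by
  intro a ha
  rwa [← ArithmeticFunction.cardFactors_pos_iff_one_lt, ArithmeticFunction.cardFactors_apply, ha.2]

theorem summable_one_div_mul_log_almostPrimes (k : ℕ) :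
    Summable fun a : almostPrimes k => 1 / ((a.1 : ℝ) * log a.1) := by
  have hpos (a : almostPrimes k) : (0 : ℝ) < a.1 := Nat.cast_pos.2 a.2.1
  have hlog (a : almostPrimes k) : 0 < log (a.1 : ℝ) + 1 :=
    add_pos_of_nonneg_of_pos (log_natCast_nonneg a.1) one_pos
  have hsum := summable_integral_of_sum_le (μ := volume.restrict (Ioi 1))
    (F := fun (a : almostPrimes k) s => (a.1 : ℝ) ^ (-s) * exp ((1 - s) * 1))
    (g := fun s => 2 ^ k * ((1 + (s - 1) ^ (-(1 / 2 : ℝ))) * exp (1 - s)))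
    (fun a => integrableOn_rpow_neg_mul_exp_Ioi (hpos a) (hlog a) 1 1)
    (fun a => .of_forall fun s => by positivity)
    ((integrableOn_one_add_rpow_neg_mul_exp one_half_lt_one).const_mul _) fun u => ?_
  · simp_rw [fun a => integral_rpow_neg_mul_exp_Ioi_one (hpos a) (hlog a) 1, sub_self, zero_mul,
      exp_zero, one_mul] at hsum
    simpa only [add_zero] using summable_one_div_mul_log_add_of_summable (h' := 0) hsum
  · filter_upwards [ae_restrict_mem measurableSet_Ioi] with s hs
    have hle := pow_mul_sum_almostPrimes_le hs one_half_pos.le one_half_lt_one.le u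
    rw [one_div, inv_pow, inv_mul_le_iff₀ (by positivity), ← one_div] at hle
    rw [← Finset.sum_mul, mul_one, ← mul_assoc]
    exact mul_le_mul_of_nonneg_right hle (exp_pos _).le

lemma almostPrimes_one : almostPrimes 1 = {p | p.Prime} := by
  ext p
  exact ⟨fun hp => ArithmeticFunction.cardFactors_eq_one_iff_prime.1 hp.2,
    fun hp => ⟨hp.pos, ArithmeticFunction.cardFactors_apply_prime hp⟩⟩

lemma primeZeta_eq_setZeta (s : ℝ) : primeZeta s = setZeta (almostPrimes 1) s := by
  rw [almostPrimes_one]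
  rfl

end AlmostPrimes

/-- If `k ≥ 2` and `σ > 1` satisfies `P_k > P` on `(1, σ)` and `P_k < P` on
`(σ, ∞)`, then `h ↦ e^{(σ−1)h} (f(N_k,h) − f(N₁,h))` is strictly increasing
on `[0, ∞)`. -/
theorem stmt_14 (k : ℕ) (hk : 2 ≤ k) (σ : ℝ) (hσ : 1 < σ)
    (h1 : ∀ s : ℝ, 1 < s → s < σ → primeZeta s < Pk k s)
    (h2 : ∀ s : ℝ, σ < s → Pk k s < primeZeta s) :
    StrictMonoOn
      (fun h : ℝ => Real.exp ((σ - 1) * h) *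
        (transSum (almostPrimes k) h - transSum (almostPrimes 1) h))
      (Set.Ici 0) := by
  refine (stmt_14_general (one_lt_of_mem_almostPrimes (one_le_two.trans hk))
    (one_lt_of_mem_almostPrimes le_rfl) (summable_one_div_mul_log_almostPrimes k)
    (summable_one_div_mul_log_almostPrimes 1)
    (fun s hs hsσ => primeZeta_eq_setZeta s ▸ h1 s hs hsσ)
    fun s _ hsσ => primeZeta_eq_setZeta s ▸ h2 s hsσ).mono fun h hh => ?_
  exact (neg_lt_zero.2 (log_pos one_lt_two)).trans_le hh
end
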